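/- There are no integers y, w, m, n with w ≠ 0 and n ≠ 0 satisfying simultaneously m² = y² − 8w² and n² = y² − 9w². Equivalently, the residual odd-prime branch system m² = p^{2d}ξ² − 8Δ₁², n² = p^{2d}ξ² − 9Δ₁² (with Δ₁ ≠ 0) has no integer solutions with n ≠ 0. -/

import Mathlib

/-!
Write the system as `n ^ 2 + w ^ 2 = m ^ 2`, `n ^ 2 + 9 * w ^ 2 = y ^ 2` and descend on `n * w`
with respect to divisibility. A common factor of `n` and `w` can be cancelled, and a solution
`(3 * k, w)` yields the solution `(w, k)`, so `n` may be assumed coprime to `3 * w`. Then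
`(n, w, m)` and `(n, 3 * w, y)` are primitive Pythagorean triples, and a congruence modulo `16`
forces `n` to be odd. Hence `n = a ^ 2 - b ^ 2 = c ^ 2 - d ^ 2`, `w = 2 * a * b` and
`c * d = 3 * a * b`. Say `3` divides `c`; otherwise exchange `a` with `b` and `c` with `d`.
Factoring `a = p * q`, `b = r * s`, `c = 3 * p * r`, `d = q * s` turns
`a ^ 2 - b ^ 2 = c ^ 2 - d ^ 2` into the equality of reduced fractions
`(s ^ 2 + p ^ 2) / (s ^ 2 + 9 * p ^ 2) = r ^ 2 / q ^ 2`, so `(s, p)` is a new solution, and `s * p`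
divides `a * b`.
-/

section Divisibility

lemma exists_factorization_of_mul_eq_mul {M : Type*} [CommMonoidWithZero M] [IsCancelMulZero M]
    [DecompositionMonoid M] {a b c d : M} (ha : a ≠ 0) (h : c * d = a * b) :
    ∃ p q r s, a = p * q ∧ b = r * s ∧ c = p * r ∧ d = q * s := by
  obtain ⟨p, q, ⟨r, rfl⟩, ⟨s, rfl⟩, rfl⟩ := exists_dvd_and_dvd_of_dvd_mul (Dvd.intro b h.symm)
  refine ⟨p, q, r, s, rfl, mul_left_cancel₀ ha ?_, rfl, rfl⟩
  rw [← h, mul_mul_mul_comm]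

lemma associated_of_mul_eq_mul_of_isCoprime {R : Type*} [CommSemiring R] [IsCancelMulZero R]
    {a b c d : R} (hab : IsCoprime a b) (hcd : IsCoprime c d) (h : a * d = b * c) :
    Associated a c :=
  associated_of_dvd_dvd (hab.dvd_of_dvd_mul_left (Dvd.intro d h))
    (hcd.dvd_of_dvd_mul_right (Dvd.intro_left b h.symm))

lemma isSquare_of_isSquare_sq_mul {R : Type*} [CommRing R] [IsDomain R] [IsIntegrallyClosed R]
    {g a : R} (hg : g ≠ 0) (h : IsSquare (g ^ 2 * a)) : IsSquare a := by
  obtain ⟨m, hm⟩ := h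
  rw [← sq] at hm
  obtain ⟨k, rfl⟩ : g ∣ m :=
    (IsIntegrallyClosed.pow_dvd_pow_iff two_ne_zero).1 (Dvd.intro a hm)
  refine ⟨k, mul_left_cancel₀ (pow_ne_zero 2 hg) ?_⟩
  linear_combination hm

lemma isCoprime_sq_add_sq_sq_add_mul_sq {R : Type*} [CommRing R] {s p k : R} (hsp : IsCoprime s p)
    (hk : IsCoprime (s ^ 2 + p ^ 2) k) :
    IsCoprime (s ^ 2 + p ^ 2) (s ^ 2 + (k + 1) * p ^ 2) := by
  have hp : IsCoprime (s ^ 2 + p ^ 2) (p ^ 2) := by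
    simpa using IsCoprime.add_mul_left_left (hsp.pow (m := 2) (n := 2)) 1
  convert IsCoprime.add_mul_left_right (hk.mul_right hp) 1 using 1
  ring

end Divisibility

section PythagoreanTriples

variable {x y z : ℤ}

lemma exists_parametrization_of_pythagoreanTriple_of_odd (h : PythagoreanTriple x y z)
    (hxy : IsCoprime x y) (hx : Odd x) :
    ∃ a b, IsCoprime a b ∧ Odd (a + b) ∧ x = a ^ 2 - b ^ 2 ∧ y = 2 * (a * b) := by
  obtain ⟨a, b, ⟨rfl, rfl⟩ | ⟨rfl, -⟩, -, hab, hparity⟩ :=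
    PythagoreanTriple.coprime_classification.1 ⟨h, Int.isCoprime_iff_gcd_eq_one.1 hxy⟩
  · exact ⟨a, b, Int.isCoprime_iff_gcd_eq_one.2 hab, by grind, rfl, by ring⟩
  · grind

lemma four_dvd_mul_iff_sq_modEq {a b : ℤ} (hab : Odd (a + b)) :
    4 ∣ a * b ↔ (a ^ 2 - b ^ 2) ^ 2 ≡ 1 [ZMOD 16] := by
  wlog hb : Even b generalizing a b
  · have ha : Even a := by grind
    rw [mul_comm, this (add_comm a b ▸ hab) ha, ← neg_sq, neg_sub]
  have ha : Odd a := by grind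
  obtain ⟨i, hi⟩ := Int.eight_dvd_sq_sub_one_of_odd ha
  obtain ⟨j, rfl⟩ := hb
  have hdvd : 4 ∣ a * (j + j) ↔ Even j := by
    have haj : Even (a * j) ↔ Even j := by grind
    rw [← haj, show a * (j + j) = 2 * (a * j) by ring]
    grind
  have hsq : (a ^ 2 - (j + j) ^ 2) ^ 2 =
      16 * (4 * i ^ 2 - 4 * i * j ^ 2 + j ^ 4 + i) - 8 * j ^ 2 + 1 := by
    rw [sub_eq_iff_eq_add.1 hi]
    ring
  have heven : Even (j ^ 2) ↔ Even j := Int.even_pow' two_ne_zero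
  rw [hdvd, ← heven, hsq, Int.ModEq]
  grind

lemma eight_dvd_iff_sq_modEq_of_pythagoreanTriple (h : PythagoreanTriple x y z)
    (hxy : IsCoprime x y) (hx : Odd x) : 8 ∣ y ↔ x ^ 2 ≡ 1 [ZMOD 16] := by
  obtain ⟨a, b, -, hab, rfl, rfl⟩ := exists_parametrization_of_pythagoreanTriple_of_odd h hxy hx
  rw [← four_dvd_mul_iff_sq_modEq hab]
  omega

lemma odd_of_pythagoreanTriple_of_pythagoreanTriple_three_mul {t : ℤ}
    (h : PythagoreanTriple x y z) (h' : PythagoreanTriple x (3 * y) t)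
    (hxy : IsCoprime x (3 * y)) : Odd x := by
  by_contra hx
  have hxy' : IsCoprime x y := hxy.of_mul_right_right
  have hy : Odd y := by
    by_contra hy
    rw [Int.not_odd_iff_even, even_iff_two_dvd] at hx hy
    exact Int.prime_two.not_isUnit (hxy'.isUnit_of_dvd' hx hy)
  have hiff : y ^ 2 ≡ 1 [ZMOD 16] ↔ (3 * y) ^ 2 ≡ 1 [ZMOD 16] :=
    (eight_dvd_iff_sq_modEq_of_pythagoreanTriple h.symm hxy'.symm hy).symm.trans
      (eight_dvd_iff_sq_modEq_of_pythagoreanTriple h'.symm hxy.symm (Odd.mul (by decide) hy))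
  have hmod : 8 ∣ y ^ 2 - 1 := Int.eight_dvd_sq_sub_one_of_odd hy
  rw [mul_pow, Int.ModEq, Int.ModEq] at hiff
  omega

end PythagoreanTriples

/-- `(x, y)` witnesses that `X ^ 2 + k * Y ^ 2` and `X ^ 2 + l * Y ^ 2` are concordant forms in the
sense of Euler: both values are squares. The points with `x = 0` or `y = 0` are excluded as trivial
ones. -/
structure IsConcordant (k l x y : ℤ) : Prop where
  left_ne_zero : x ≠ 0
  right_ne_zero : y ≠ 0
  isSquare_fst : IsSquare (x ^ 2 + k * y ^ 2)
  isSquare_snd : IsSquare (x ^ 2 + l * y ^ 2)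

namespace IsConcordant

variable {k l x y : ℤ}

lemma of_mul {g : ℤ} (h : IsConcordant k l (g * x) (g * y)) : IsConcordant k l x y where
  left_ne_zero := right_ne_zero_of_mul h.left_ne_zero
  right_ne_zero := right_ne_zero_of_mul h.right_ne_zero
  isSquare_fst := isSquare_of_isSquare_sq_mul (left_ne_zero_of_mul h.left_ne_zero) <|
    (by ring : (g * x) ^ 2 + k * (g * y) ^ 2 = g ^ 2 * (x ^ 2 + k * y ^ 2)) ▸ h.isSquare_fst
  isSquare_snd := isSquare_of_isSquare_sq_mul (left_ne_zero_of_mul h.left_ne_zero) <|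
    (by ring : (g * x) ^ 2 + l * (g * y) ^ 2 = g ^ 2 * (x ^ 2 + l * y ^ 2)) ▸ h.isSquare_snd

lemma swap (h : IsConcordant 1 (k ^ 2) (k * x) y) : IsConcordant 1 (k ^ 2) y x where
  left_ne_zero := h.right_ne_zero
  right_ne_zero := right_ne_zero_of_mul h.left_ne_zero
  isSquare_fst := isSquare_of_isSquare_sq_mul (left_ne_zero_of_mul h.left_ne_zero) <|
    (by ring : (k * x) ^ 2 + k ^ 2 * y ^ 2 = k ^ 2 * (y ^ 2 + 1 * x ^ 2)) ▸ h.isSquare_snd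
  isSquare_snd :=
    (by ring : (k * x) ^ 2 + 1 * y ^ 2 = y ^ 2 + k ^ 2 * x ^ 2) ▸ h.isSquare_fst

end IsConcordant

section Descent

variable {a b c d p q r s : ℤ}

lemma odd_sq_add_sq_of_sq_mul_eq_sq_mul (hodd : Odd (p * q + r * s))
    (h : q ^ 2 * (s ^ 2 + p ^ 2) = r ^ 2 * (s ^ 2 + 9 * p ^ 2)) : Odd (s ^ 2 + p ^ 2) := by
  rcases Int.even_or_odd p with hp | hp <;> rcases Int.even_or_odd s with hs | hs
  · exact absurd hodd (Int.not_odd_iff_even.2 ((hp.mul_right q).add (hs.mul_left r)))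
  · exact hs.pow.add_even (hp.pow_of_ne_zero two_ne_zero)
  · exact (hs.pow_of_ne_zero two_ne_zero).add_odd hp.pow
  · exfalso
    obtain ⟨i, hi⟩ := Int.eight_dvd_sq_sub_one_of_odd hp
    obtain ⟨j, hj⟩ := Int.eight_dvd_sq_sub_one_of_odd hs
    have hhalf : q ^ 2 * (2 * (2 * (i + j)) + 1) = r ^ 2 * (2 * (2 * (9 * i + j + 1)) + 1) := by
      apply mul_left_cancel₀ (two_ne_zero (α := ℤ))
      linear_combination h - q ^ 2 * (hi + hj) + r ^ 2 * (9 * hi + hj)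
    have hqr : Even q ↔ Even r := by
      simpa only [Int.even_mul, Int.even_pow' two_ne_zero, Int.not_even_two_mul_add_one, or_false]
        using iff_of_eq (congrArg Even hhalf)
    refine Int.not_even_iff_odd.2 hodd ?_
    simp [Int.even_add, Int.even_mul, Int.not_even_iff_odd.2 hp, Int.not_even_iff_odd.2 hs, hqr]

lemma isConcordant_of_sq_mul_eq_sq_mul (hs : s ≠ 0) (hp : p ≠ 0) (hqr : IsCoprime q r)
    (hps : IsCoprime p s) (hodd : Odd (p * q + r * s))
    (h : q ^ 2 * (s ^ 2 + p ^ 2) = r ^ 2 * (s ^ 2 + 9 * p ^ 2)) : IsConcordant 1 9 s p := by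
  have hred : IsCoprime (s ^ 2 + p ^ 2) (s ^ 2 + 9 * p ^ 2) :=
    isCoprime_sq_add_sq_sq_add_mul_sq hps.symm <| IsCoprime.pow_right (n := 3) <|
      Int.isCoprime_two_right.2 (odd_sq_add_sq_of_sq_mul_eq_sq_mul hodd h)
  have hred' : IsCoprime (r ^ 2) (q ^ 2) := hqr.symm.pow
  have hr : s ^ 2 + p ^ 2 = r ^ 2 := Int.eq_of_associated_of_nonneg
    (associated_of_mul_eq_mul_of_isCoprime hred hred' (by linear_combination h))
    (by positivity) (by positivity)
  have hq : s ^ 2 + 9 * p ^ 2 = q ^ 2 := Int.eq_of_associated_of_nonneg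
    (associated_of_mul_eq_mul_of_isCoprime hred.symm hred'.symm (by linear_combination -h))
    (by positivity) (by positivity)
  exact ⟨hs, hp, by rw [one_mul, hr]; exact IsSquare.sq r, hq ▸ IsSquare.sq q⟩

lemma exists_isConcordant_of_mul_eq_mul (hab : IsCoprime a b) (hodd : Odd (a + b))
    (h0 : a * b ≠ 0) (hmul : c * d = a * b) (hsq : a ^ 2 - b ^ 2 = 9 * c ^ 2 - d ^ 2) :
    ∃ x y, IsConcordant 1 9 x y ∧ x * y ∣ a * b := by
  obtain ⟨p, q, r, s, rfl, rfl, rfl, rfl⟩ :=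
    exists_factorization_of_mul_eq_mul (left_ne_zero_of_mul h0) hmul
  have hp : p ≠ 0 := left_ne_zero_of_mul (left_ne_zero_of_mul h0)
  have hs : s ≠ 0 := right_ne_zero_of_mul (right_ne_zero_of_mul h0)
  refine ⟨s, p, isConcordant_of_sq_mul_eq_sq_mul hs hp ?_ ?_ hodd ?_, q * r, by ring⟩
  · exact hab.of_mul_left_right.of_mul_right_left
  · exact hab.of_mul_left_left.of_mul_right_right
  · linear_combination hsq

lemma exists_isConcordant_of_mul_eq_three_mul (hab : IsCoprime a b) (hodd : Odd (a + b))
    (h0 : a * b ≠ 0) (hmul : c * d = 3 * (a * b)) (hsq : a ^ 2 - b ^ 2 = c ^ 2 - d ^ 2) :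
    ∃ x y, IsConcordant 1 9 x y ∧ x * y ∣ a * b := by
  rcases Int.prime_three.dvd_or_dvd (Dvd.intro _ hmul.symm) with ⟨e, rfl⟩ | ⟨e, rfl⟩
  · exact exists_isConcordant_of_mul_eq_mul hab hodd h0 (c := e) (d := d) (by linarith)
      (by linarith)
  · rw [mul_comm a b] at h0 hmul ⊢
    exact exists_isConcordant_of_mul_eq_mul hab.symm (add_comm a b ▸ hodd) h0 (c := e) (d := c)
      (by linarith) (by linarith)

end Descent

namespace IsConcordant

variable {k l x y : ℤ}

lemma exists_dvdNotUnit_of_not_isCoprime (h : IsConcordant k l x y) (hxy : ¬ IsCoprime x y) :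
    ∃ x' y', IsConcordant k l x' y' ∧ DvdNotUnit (x' * y') (x * y) := by
  obtain ⟨g, hg, ⟨x', rfl⟩, ⟨y', rfl⟩⟩ : ∃ g : ℤ, Prime g ∧ g ∣ x ∧ g ∣ y := by
    by_contra! hprime
    exact hxy (isCoprime_of_prime_dvd (fun h0 ↦ h.left_ne_zero h0.1) hprime)
  exact ⟨x', y', h.of_mul, mul_ne_zero h.of_mul.left_ne_zero h.of_mul.right_ne_zero, g * g,
    fun hunit ↦ hg.not_isUnit (isUnit_of_mul_isUnit_left hunit), by ring⟩

lemma exists_dvdNotUnit_of_dvd_left (h : IsConcordant 1 (k ^ 2) x y) (hk : ¬ IsUnit k)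
    (hkx : k ∣ x) : ∃ x' y', IsConcordant 1 (k ^ 2) x' y' ∧ DvdNotUnit (x' * y') (x * y) := by
  obtain ⟨x', rfl⟩ := hkx
  exact ⟨y, x', h.swap, mul_ne_zero h.swap.left_ne_zero h.swap.right_ne_zero, k, hk, by ring⟩

lemma exists_dvdNotUnit_of_isCoprime (h : IsConcordant 1 9 x y) (hxy : IsCoprime x (3 * y)) :
    ∃ x' y', IsConcordant 1 9 x' y' ∧ DvdNotUnit (x' * y') (x * y) := by
  obtain ⟨m, hm⟩ := h.isSquare_fst
  obtain ⟨n, hn⟩ := h.isSquare_snd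
  have htriple : PythagoreanTriple x y m := by
    unfold PythagoreanTriple; linear_combination hm
  have htriple' : PythagoreanTriple x (3 * y) n := by
    unfold PythagoreanTriple; linear_combination hn
  have hx : Odd x := odd_of_pythagoreanTriple_of_pythagoreanTriple_three_mul htriple htriple' hxy
  obtain ⟨a, b, hab, hodd, hxab, rfl⟩ :=
    exists_parametrization_of_pythagoreanTriple_of_odd htriple hxy.of_mul_right_right hx
  obtain ⟨c, d, -, -, hxcd, hmul⟩ :=
    exists_parametrization_of_pythagoreanTriple_of_odd htriple' hxy hx
  obtain ⟨x', y', h', t, ht⟩ := exists_isConcordant_of_mul_eq_three_mul hab hodd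
    (right_ne_zero_of_mul h.right_ne_zero) (by linarith) (hxab.symm.trans hxcd)
  refine ⟨x', y', h', mul_ne_zero h'.left_ne_zero h'.right_ne_zero, 2 * (t * x),
    fun hunit ↦ Int.prime_two.not_isUnit (isUnit_of_mul_isUnit_left hunit), ?_⟩
  rw [ht]
  ring

lemma exists_dvdNotUnit (h : IsConcordant 1 9 x y) :
    ∃ x' y', IsConcordant 1 9 x' y' ∧ DvdNotUnit (x' * y') (x * y) := by
  by_cases hxy : IsCoprime x y
  · by_cases h3 : 3 ∣ x
    · exact exists_dvdNotUnit_of_dvd_left (k := 3) h Int.prime_three.not_isUnit h3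
    · have hx3 : IsCoprime x 3 := (Int.prime_three.coprime_iff_not_dvd.2 h3).symm
      exact h.exists_dvdNotUnit_of_isCoprime (hx3.mul_right hxy)
  · exact h.exists_dvdNotUnit_of_not_isCoprime hxy

end IsConcordant

theorem not_isConcordant_one_nine (x y : ℤ) : ¬ IsConcordant 1 9 x y := by
  suffices ∀ t x y : ℤ, x * y = t → ¬ IsConcordant 1 9 x y from this _ x y rfl
  refine wellFounded_dvdNotUnit.fix fun t ih ↦ ?_
  rintro x y rfl h
  obtain ⟨x', y', h', hlt⟩ := h.exists_dvdNotUnit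
  exact ih _ hlt x' y' rfl h'

theorem residual_system_no_solution :
    ¬ ∃ y w m n : ℤ, w ≠ 0 ∧ n ≠ 0 ∧ m ^ 2 = y ^ 2 - 8 * w ^ 2 ∧
      n ^ 2 = y ^ 2 - 9 * w ^ 2 := by
  rintro ⟨y, w, m, n, hw, hn, hm, hy⟩
  refine not_isConcordant_one_nine n w ⟨hn, hw, ⟨m, ?_⟩, ⟨y, ?_⟩⟩
  · linear_combination hy - hm
  · linear_combination hy
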